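/- Let X and Y be irreducible excellent Noetherian schemes and f : X → Y a dominant morphism of finite type. Then there exists a nonempty Zariski open subscheme V of Y such that X_V = X ×_Y V is generically dimensional, i.e., every nonempty open subscheme U of X_V satisfies dim U = dim X_V. -/

import Mathlib

open AlgebraicGeometry CategoryTheory CategoryTheory.Limits

universe u

/-- A stand-in for the class of excellent schemes (not yet in Mathlib): a scheme all of
whose local rings are excellent. -/
class IsExcellent (X : Scheme.{u}) : Prop where

/-- An irreducible scheme `Z` is *generically dimensional* if every nonempty Zariski open
subscheme `U` of `Z` satisfies `dim U = dim Z` (Krull dimension of the underlying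
topological spaces). -/
def GenericallyDimensional (Z : Scheme.{u}) : Prop :=
  ∀ U : Z.Opens, (U : Set Z).Nonempty →
    topologicalKrullDim (U : Set Z) = topologicalKrullDim Z

theorem gd_dim_integral {R S : Type*} [CommRing R] [CommRing S] [Algebra R S]
    [Algebra.IsIntegral R S] (hinj : Function.Injective (algebraMap R S)) :
    ringKrullDim S = ringKrullDim R := by
  apply le_antisymm
  · refine Order.krullDim_le_of_strictMono (PrimeSpectrum.comap (algebraMap R S)) ?_
    intro I J h
    exact Ideal.IsIntegral.comap_lt_comap (R := R) (I := I.asIdeal) (J := J.asIdeal) h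
  · refine iSup_le fun l => ?_
    obtain ⟨Q, -, hQ, hQ'⟩ := Ideal.exists_ideal_over_prime_of_isIntegral (R := R) (S := S)
      l.head.asIdeal ⊥ (by
        rw [← RingHom.ker_eq_comap_bot, (RingHom.injective_iff_ker_eq_bot _).mp hinj]; exact bot_le)
    have : Q.LiesOver (RelSeries.head l).asIdeal := ⟨hQ'.symm⟩
    obtain ⟨L, hL, -⟩ := Ideal.exists_ltSeries_of_hasGoingUp (S := S) l Q
    rw [← hL]
    exact le_iSup (fun p : LTSeries (PrimeSpectrum S) => (p.length : WithBot ℕ∞)) L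

/-- Generic Noether normalization, weak form. -/
theorem gd_normalization (A B : Type u) [CommRing A] [IsDomain A] [CommRing B] [IsDomain B]
    [Algebra A B] [Algebra.FiniteType A B] (hinj : Function.Injective (algebraMap A B)) :
    ∃ (e : ℕ) (h : MvPolynomial (Fin e) A →ₐ[A] B), Function.Injective h ∧
      ∀ b : B, ∃ a : A, a ≠ 0 ∧ h.toRingHom.IsIntegralElem (a • b) := by
  let K := FractionRing A
  let M := Algebra.algebraMapSubmonoid B (nonZeroDivisors A)
  have hM : M ≤ nonZeroDivisors B := by
    rintro _ ⟨a, ha, rfl⟩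
    refine mem_nonZeroDivisors_of_ne_zero ?_
    rw [Ne, map_eq_zero_iff _ hinj]
    exact nonZeroDivisors.ne_zero ha
  let L := Localization M
  have : IsDomain L := IsLocalization.isDomain_localization hM
  have hBL : Function.Injective (algebraMap B L) := IsLocalization.injective L hM
  have : Algebra.FiniteType K L := by
    have : IsLocalization (Submonoid.map (algebraMap A B) (nonZeroDivisors A)) L :=
      inferInstanceAs (IsLocalization M L)
    exact RingHom.finiteType_localizationPreserves (algebraMap A B) (nonZeroDivisors A) K L
      (RingHom.finiteType_algebraMap.mpr inferInstance)
  obtain ⟨e, g, hg, hgi⟩ := exists_integral_inj_algHom_of_fg K L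
  obtain ⟨⟨_, a, ha, rfl⟩, hc⟩ := IsLocalization.exist_integer_multiples_of_finite M
    (fun i => g (MvPolynomial.X i))
  choose c hc using hc
  have ha0 : algebraMap A K a ≠ 0 := by
    rw [Ne, map_eq_zero_iff _ (IsFractionRing.injective A K)]
    exact nonZeroDivisors.ne_zero ha
  have hc' : ∀ i, algebraMap B L (c i) = algebraMap K L (algebraMap A K a) * g (MvPolynomial.X i) := by
    intro i
    rw [hc, ← IsScalarTower.algebraMap_apply A K L, IsScalarTower.algebraMap_apply A B L]
    simp [Algebra.smul_def]
  let σ : MvPolynomial (Fin e) K →ₐ[K] MvPolynomial (Fin e) K :=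
    MvPolynomial.aeval (fun i => MvPolynomial.C (algebraMap A K a) * MvPolynomial.X i)
  let τ : MvPolynomial (Fin e) K →ₐ[K] MvPolynomial (Fin e) K :=
    MvPolynomial.aeval (fun i => MvPolynomial.C (algebraMap A K a)⁻¹ * MvPolynomial.X i)
  have hτσ : τ.comp σ = AlgHom.id _ _ := by
    ext i : 1
    simp only [σ, τ, AlgHom.comp_apply, MvPolynomial.aeval_X, map_mul, MvPolynomial.algHom_C,
      MvPolynomial.algebraMap_eq, AlgHom.id_apply]
    rw [← mul_assoc, ← map_mul, mul_inv_cancel₀ ha0, map_one, one_mul]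
  have hστ : σ.comp τ = AlgHom.id _ _ := by
    ext i : 1
    simp only [σ, τ, AlgHom.comp_apply, MvPolynomial.aeval_X, map_mul, MvPolynomial.algHom_C,
      MvPolynomial.algebraMap_eq, AlgHom.id_apply]
    rw [← mul_assoc, ← map_mul, inv_mul_cancel₀ ha0, map_one, one_mul]
  have hσi : Function.Injective σ := Function.LeftInverse.injective (g := τ) (DFunLike.congr_fun hτσ)
  have hσs : Function.Surjective σ := Function.RightInverse.surjective (g := τ) (DFunLike.congr_fun hστ)
  let g' := g.comp σ
  have hg' : Function.Injective g' := hg.comp hσi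
  have hgi' : g'.toRingHom.IsIntegral :=
    RingHom.IsIntegral.trans σ.toRingHom g.toRingHom
      (RingHom.isIntegral_of_surjective _ hσs) hgi
  let h : MvPolynomial (Fin e) A →ₐ[A] B := MvPolynomial.aeval c
  have hcomm : (algebraMap B L).comp h.toRingHom =
      g'.toRingHom.comp (MvPolynomial.map (algebraMap A K)) := by
    ext i
    · simp [h, g', σ, ← IsScalarTower.algebraMap_apply A K L, ← IsScalarTower.algebraMap_apply A B L]
    · simp [h, g', σ, hc']
  have hcomm' : ∀ p, algebraMap B L (h p) = g' (MvPolynomial.map (algebraMap A K) p) :=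
    fun p => RingHom.congr_fun hcomm p
  refine ⟨e, h, ?_, ?_⟩
  · intro p q hpq
    apply MvPolynomial.map_injective _ (IsFractionRing.injective A K)
    apply hg'
    rw [← hcomm', ← hcomm', hpq]
  · intro b
    let R := MvPolynomial (Fin e) A
    let RK := MvPolynomial (Fin e) K
    let : Algebra R RK := MvPolynomial.algebraMvPolynomial
    let : Algebra RK L := g'.toRingHom.toAlgebra
    let : Algebra R B := h.toRingHom.toAlgebra
    have : IsScalarTower R RK L := IsScalarTower.of_algebraMap_eq'
      ((IsScalarTower.algebraMap_eq R B L).trans hcomm)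
    have hb : IsIntegral RK (algebraMap B L b) := hgi' _
    obtain ⟨⟨_, a, ha, rfl⟩, hi⟩ := IsIntegral.exists_multiple_integral_of_isLocalization (R := R)
      ((nonZeroDivisors A).map (MvPolynomial.C (σ := Fin e))) _ hb
    refine ⟨a, nonZeroDivisors.ne_zero ha, ?_⟩
    change IsIntegral R (a • b)
    rw [← isIntegral_algebraMap_iff hBL]
    have key : algebraMap B L (a • b) =
        (MvPolynomial.C a : MvPolynomial (Fin e) A) • (algebraMap B L b) := by
      have e1 : a • b = (MvPolynomial.C a : R) • b := by
        rw [Algebra.smul_def, Algebra.smul_def]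
        congr 1
        exact (h.commutes a).symm
      rw [e1, Algebra.smul_def, map_mul, ← IsScalarTower.algebraMap_apply R B L, ← Algebra.smul_def]
    rw [key]
    exact hi

theorem gd_int {R B Rt Bt : Type*} [CommRing R] [CommRing B] [CommRing Rt] [CommRing Bt]
    [Algebra R B] [Algebra R Rt] [Algebra B Bt] (t : R) [hRt : IsLocalization.Away t Rt]
    [hBt : IsLocalization.Away (algebraMap R B t) Bt]
    (hRB : Function.Injective (algebraMap R B)) (S : Set B) (hS : Algebra.adjoin R S = ⊤)
    (hi : ∀ b ∈ S, IsIntegral R (t • b)) : ringKrullDim Bt = ringKrullDim Rt := by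
  have hloc : IsLocalization (Algebra.algebraMapSubmonoid B (Submonoid.powers t)) Bt := by
    rw [Algebra.algebraMapSubmonoid_powers]; exact hBt
  let : Algebra Rt Bt := localizationAlgebra (Submonoid.powers t) B
  have hmap : ∀ r : R, algebraMap Rt Bt (algebraMap R Rt r) = algebraMap B Bt (algebraMap R B r) := by
    intro r
    exact IsLocalization.map_eq _ r
  have hinj' : Function.Injective (algebraMap Rt Bt) := by
    have : IsLocalization ((Submonoid.powers t).map (algebraMap R B)) Bt := hloc
    exact IsLocalization.map_injective_of_injective _ _ _ hRB
  have hint : Algebra.IsIntegral Rt Bt := by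
    have hu : IsUnit (algebraMap R Rt t) := IsLocalization.Away.algebraMap_isUnit t
    have hB : ∀ b : B, IsIntegral Rt (algebraMap B Bt b) := by
      intro b
      have hb : b ∈ Algebra.adjoin R (S : Set B) := by rw [hS]; trivial
      induction hb using Algebra.adjoin_induction with
      | algebraMap c => rw [← hmap]; exact isIntegral_algebraMap
      | add x y _ _ hx hy => rw [map_add]; exact hx.add hy
      | mul x y _ _ hx hy => rw [map_mul]; exact hx.mul hy
      | mem x hx =>
        have h1 : IsIntegral Rt (algebraMap B Bt (t • x)) := by
          obtain ⟨p, hp, hp'⟩ := hi x hx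
          refine ⟨p.map (algebraMap R Rt), hp.map _, ?_⟩
          rw [Polynomial.eval₂_map]
          have : (algebraMap Rt Bt).comp (algebraMap R Rt) =
            (algebraMap B Bt).comp (algebraMap R B) := RingHom.ext hmap
          rw [this, ← Polynomial.hom_eval₂, hp', map_zero]
        obtain ⟨u, hu⟩ := hu
        have h3 := (isIntegral_algebraMap (R := Rt) (A := Bt) (x := (↑u⁻¹ : Rt))).mul h1
        convert h3 using 1
        rw [Algebra.smul_def, map_mul, ← hmap, ← hu, ← mul_assoc, ← map_mul, Units.inv_mul,
          map_one, one_mul]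
    constructor
    intro y
    obtain ⟨b, ⟨_, r, hr, rfl⟩, rfl⟩ := IsLocalization.exists_mk'_eq
      (Algebra.algebraMapSubmonoid B (Submonoid.powers t)) y
    have hru : IsUnit (algebraMap R Rt r) := IsLocalization.map_units Rt ⟨r, hr⟩
    obtain ⟨u, hu⟩ := hru
    convert (isIntegral_algebraMap (R := Rt) (A := Bt) (x := (↑u⁻¹ : Rt))).mul (hB b) using 1
    rw [IsLocalization.mk'_eq_iff_eq_mul]
    change _ = _ * algebraMap B Bt (algebraMap R B r)
    rw [← hmap, ← hu, mul_right_comm, ← map_mul, Units.inv_mul, map_one, one_mul]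
  exact gd_dim_integral hinj'

theorem gd_alg (A B : Type u) [CommRing A] [IsDomain A] [IsNoetherianRing A]
    [CommRing B] [IsDomain B]
    [Algebra A B] [Algebra.FiniteType A B] (hinj : Function.Injective (algebraMap A B)) :
    ∃ s : A, s ≠ 0 ∧ ∀ t : A, t ≠ 0 → s ∣ t → ∀ (At Bt : Type u) [CommRing At] [CommRing Bt]
      [Algebra A At] [Algebra B Bt] [IsLocalization.Away t At]
      [IsLocalization.Away (algebraMap A B t) Bt],
      ringKrullDim Bt = ringKrullDim At + (Cardinal.toNat (Algebra.trdeg A B) : ℕ) := by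
  obtain ⟨e, h, hh, hi⟩ := gd_normalization A B hinj
  let R := MvPolynomial (Fin e) A
  let : Algebra R B := h.toRingHom.toAlgebra
  have : IsScalarTower A R B := IsScalarTower.of_algebraMap_eq' h.comp_algebraMap.symm
  have hRB : Function.Injective (algebraMap R B) := hh
  have hi' : ∀ b : B, ∃ a : A, a ≠ 0 ∧ IsIntegral R (a • b) := hi
  have : FaithfulSMul A R := (faithfulSMul_iff_algebraMap_injective _ _).mpr
    (MvPolynomial.C_injective _ _)
  have : FaithfulSMul R B := (faithfulSMul_iff_algebraMap_injective _ _).mpr hRB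
  have halg : Algebra.IsAlgebraic R B := by
    constructor
    intro b
    obtain ⟨a, ha, hab⟩ := hi' b
    have ha' : algebraMap A R a ≠ 0 := by
      rwa [Ne, map_eq_zero_iff _ (FaithfulSMul.algebraMap_injective A R)]
    rw [← algebraMap_smul R] at hab
    obtain ⟨p, hp, hp'⟩ := hab.isAlgebraic
    refine ⟨p.comp (Polynomial.C (algebraMap A R a) * Polynomial.X), ?_, ?_⟩
    · rw [Ne, Polynomial.comp_C_mul_X_eq_zero_iff]
      · exact hp
      · exact mem_nonZeroDivisors_of_ne_zero ha'
    · rw [Polynomial.aeval_comp]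
      simpa [Algebra.smul_def] using hp'
  have htr : Algebra.trdeg A B = e := by
    have h1 := _root_.trdeg_add_eq A R (A := B)
    rw [trdeg_eq_zero (R := R) (A := B), MvPolynomial.trdeg_of_isDomain] at h1
    rw [← h1]; simp
  obtain ⟨S, hS⟩ := (Algebra.FiniteType.out : (⊤ : Subalgebra A B).FG)
  choose a ha hai using hi'
  refine ⟨∏ b ∈ S, a b, Finset.prod_ne_zero_iff.mpr fun b _ => ha b, ?_⟩
  intro t ht hst At Bt _ _ _ _ hAt hBt
  have hat : ∀ b ∈ S, a b ∣ t := fun b hb => (Finset.dvd_prod_of_mem a hb).trans hst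
  let Rt := MvPolynomial (Fin e) At
  let : Algebra R Rt := MvPolynomial.algebraMvPolynomial
  have hRt : IsLocalization.Away (algebraMap A R t) Rt := by
    have := MvPolynomial.isLocalization (σ := Fin e) (Submonoid.powers t) At
    rw [Submonoid.map_powers] at this
    exact this
  have hBt' : IsLocalization.Away (algebraMap R B (algebraMap A R t)) Bt := by
    rw [← IsScalarTower.algebraMap_apply]; exact hBt
  have : IsNoetherianRing At := IsLocalization.isNoetherianRing (Submonoid.powers t) At inferInstance
  rw [gd_int (Rt := Rt) (algebraMap A R t) hRB (S : Set B), htr]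
  · rw [MvPolynomial.ringKrullDim_of_isNoetherianRing]
    simp
  · rw [eq_top_iff]
    intro b _
    have hb : b ∈ Algebra.adjoin A (S : Set B) := by rw [hS]; trivial
    induction hb using Algebra.adjoin_induction with
    | algebraMap c => rw [IsScalarTower.algebraMap_apply A R B]; exact Subalgebra.algebraMap_mem _ _
    | add x y _ _ hx hy => exact add_mem (hx trivial) (hy trivial)
    | mul x y _ _ hx hy => exact mul_mem (hx trivial) (hy trivial)
    | mem x hx => exact Algebra.subset_adjoin hx
  · intro b hb
    obtain ⟨c, hc⟩ := hat b hb
    rw [algebraMap_smul, hc, mul_comm, mul_smul, ← algebraMap_smul R c]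
    exact (hai b).smul _

section
open TopologicalSpace

theorem gd_trdeg (A B K : Type u) [CommRing A] [IsDomain A] [CommRing B] [IsDomain B] [Field K]
    [Algebra A B] [Algebra B K] [Algebra A K] [IsScalarTower A B K] [IsFractionRing B K]
    (hinj : Function.Injective (algebraMap A B)) : Algebra.trdeg A B = Algebra.trdeg A K := by
  have : FaithfulSMul A B := (faithfulSMul_iff_algebraMap_injective _ _).mpr hinj
  have : FaithfulSMul B K := (faithfulSMul_iff_algebraMap_injective _ _).mpr
    (IsFractionRing.injective B K)
  have : Algebra.IsAlgebraic B K := IsLocalization.isAlgebraic K (nonZeroDivisors B)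
  have h := _root_.trdeg_add_eq A B (A := K)
  rw [trdeg_eq_zero (R := B) (A := K), add_zero] at h
  exact h

theorem gd_dim_cover {X : Type*} [TopologicalSpace X] {ι : Type*} (U : ι → Opens X)
    (hU : ∀ x, ∃ i, x ∈ U i) (c : WithBot ℕ∞)
    (h : ∀ i, topologicalKrullDim (U i : Set X) ≤ c) : topologicalKrullDim X ≤ c := by
  unfold topologicalKrullDim
  rw [Order.krullDim_eq_iSup_coheight]
  refine iSup_le fun Z => ?_
  obtain ⟨x, hx⟩ := Z.2.nonempty
  obtain ⟨i, hi⟩ := hU x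
  have hemb : Topology.IsOpenEmbedding ((↑) : ↥(U i : Set X) → X) := (U i).isOpenEmbedding'
  let Z' := (IrreducibleCloseds.orderIsoOfIsOpenEmbedding _ hemb).symm
    ⟨Z, ⟨⟨x, hi⟩, hx⟩⟩
  have := Topology.IsOpenEmbedding.coheight_map hemb Z'
  have e : IrreducibleCloseds.map _ hemb.continuous Z' = Z := by
    have := (IrreducibleCloseds.orderIsoOfIsOpenEmbedding _ hemb).apply_symm_apply
      ⟨Z, ⟨⟨x, hi⟩, hx⟩⟩
    exact congrArg Subtype.val this
  rw [e] at this
  rw [this]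
  exact (Order.coheight_le_krullDim _).trans (h i)

theorem gd_dim_affine {X : Scheme.{u}} {U : X.Opens} (hU : IsAffineOpen U) :
    topologicalKrullDim (U : Set X) = ringKrullDim Γ(X, U) := by
  rw [← PrimeSpectrum.topologicalKrullDim_eq_ringKrullDim]
  exact IsHomeomorph.topologicalKrullDim_eq _ (Scheme.homeoOfIso hU.isoSpec).isHomeomorph

theorem gd_dim_mono {X : Type*} [TopologicalSpace X] {s t : Set X} (h : s ⊆ t) :
    topologicalKrullDim s ≤ topologicalKrullDim t :=
  (Topology.IsEmbedding.inclusion h).isInducing.topologicalKrullDim_le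

theorem gd_key {X Y : Scheme.{u}} [IsIntegral X] [IsIntegral Y] [IsLocallyNoetherian Y]
    (f : X ⟶ Y) [IsDominant f] [LocallyOfFiniteType f] (V : Y.Opens) (hV : IsAffineOpen V)
    (hVne : (V : Set Y).Nonempty) :
    ∃ e : ℕ, ∀ U : X.Opens, IsAffineOpen U → (U : Set X).Nonempty → U ≤ f ⁻¹ᵁ V →
      ∃ s : Γ(Y, V), s ≠ 0 ∧ ∀ t : Γ(Y, V), t ≠ 0 → s ∣ t →
        topologicalKrullDim ((U ⊓ f ⁻¹ᵁ Y.basicOpen t : X.Opens) : Set X) =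
          topologicalKrullDim (Y.basicOpen t : Set Y) + (e : ℕ) := by
  have hgen : genericPoint X ∈ f ⁻¹ᵁ V := by
    obtain ⟨x, hx⟩ := f.denseRange.exists_mem_open V.2 hVne
    exact ((genericPoint_spec X).specializes trivial).mem_open (f ⁻¹ᵁ V).2 hx
  let A := Γ(Y, V)
  let K := X.functionField
  let ψ : Γ(Y, V) ⟶ X.functionField := f.app V ≫ X.presheaf.germ (f ⁻¹ᵁ V) (genericPoint X) hgen
  let algAK : Algebra A K := ψ.hom.toAlgebra
  refine ⟨Cardinal.toNat (Algebra.trdeg A K), ?_⟩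
  intro U hU hUne hUV
  have : Nonempty V := hVne.to_subtype
  have : Nonempty U := hUne.to_subtype
  have hgU : genericPoint X ∈ U :=
    ((genericPoint_spec X).specializes trivial).mem_open U.2 hUne.choose_spec
  let B := Γ(X, U)
  let φ := f.appLE V U hUV
  let algAB : Algebra A B := φ.hom.toAlgebra
  have : IsNoetherianRing A := IsLocallyNoetherian.component_noetherian ⟨V, hV⟩
  have : IsDomain A := inferInstanceAs (IsDomain Γ(Y, V))
  have : IsDomain B := inferInstanceAs (IsDomain Γ(X, U))
  have hft : Algebra.FiniteType A B := Scheme.Hom.finiteType_appLE f hV hU hUV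
  have hbo : ∀ t : Γ(Y, V), X.basicOpen (φ t) = U ⊓ f ⁻¹ᵁ Y.basicOpen t := fun t =>
    Scheme.basicOpen_appLE ..
  have hinj : Function.Injective (algebraMap A B) := by
    rw [injective_iff_map_eq_zero]
    intro t ht
    by_contra h0
    have h1 : X.basicOpen (φ t) = ⊥ := by
      have : φ t = 0 := ht
      rw [this]; simp
    have h2 : Y.basicOpen t ≠ ⊥ := by
      rwa [Ne, basicOpen_eq_bot_iff]
    obtain ⟨y, hy⟩ := Opens.ne_bot_iff_nonempty _ |>.mp h2
    obtain ⟨x, hx⟩ := f.denseRange.exists_mem_open (Y.basicOpen t).2 ⟨y, hy⟩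
    have h3 : genericPoint X ∈ f ⁻¹ᵁ Y.basicOpen t :=
      ((genericPoint_spec X).specializes trivial).mem_open (f ⁻¹ᵁ _).2 hx
    have h4 : genericPoint X ∈ X.basicOpen (φ t) := by
      rw [hbo]; exact ⟨hgU, h3⟩
    rw [h1] at h4
    exact h4
  have hfr : IsFractionRing B K := functionField_isFractionRing_of_isAffineOpen X U hU
  have htow : IsScalarTower A B K := by
    apply IsScalarTower.of_algebraMap_eq'
    have : ψ = φ ≫ X.germToFunctionField U := by
      simp only [ψ, φ, Scheme.Hom.appLE, Category.assoc]
      rw [TopCat.Presheaf.germ_res]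
    exact congrArg CommRingCat.Hom.hom this
  obtain ⟨s, hs0, hs⟩ := gd_alg A B hinj
  refine ⟨s, hs0, fun t ht hst => ?_⟩
  have := hV.isLocalization_basicOpen t
  have := hU.isLocalization_basicOpen (φ t)
  rw [← hbo, gd_dim_affine (hV.basicOpen t), gd_dim_affine (hU.basicOpen (φ t)),
    ← gd_trdeg A B K hinj]
  exact hs t ht hst Γ(Y, Y.basicOpen t) Γ(X, X.basicOpen (φ t))

theorem gd_integral {X Y : Scheme.{u}} [IsIntegral X] [IsIntegral Y] [IsNoetherian X]
    [IsNoetherian Y] (f : X ⟶ Y) [IsDominant f] [LocallyOfFiniteType f] :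
    ∃ V : Y.Opens, (V : Set Y).Nonempty ∧ ∀ U : X.Opens, (U : Set X).Nonempty → U ≤ f ⁻¹ᵁ V →
      topologicalKrullDim (U : Set X) = topologicalKrullDim ((f ⁻¹ᵁ V : X.Opens) : Set X) := by
  obtain ⟨d, ⟨V0, hV0, rfl⟩, hmin⟩ := (wellFounded_lt (α := WithBot ℕ∞)).has_min
    {d | ∃ V : Y.Opens, (V : Set Y).Nonempty ∧ topologicalKrullDim (V : Set Y) = d}
    ⟨_, ⊤, ⟨Classical.choice inferInstance, trivial⟩, rfl⟩
  obtain ⟨y, hy⟩ := hV0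
  obtain ⟨V1, hV1, hy1, hV10⟩ := exists_isAffineOpen_mem_and_subset (U := V0) hy
  have hd : ∀ W : Y.Opens, (W : Set Y).Nonempty → W ≤ V1 →
      topologicalKrullDim (W : Set Y) = topologicalKrullDim (V0 : Set Y) := by
    intro W hW hWV
    apply le_antisymm
    · exact gd_dim_mono (fun x hx => hV10 (hWV hx))
    · exact not_lt.mp (hmin _ ⟨W, hW, rfl⟩)
  obtain ⟨e, he⟩ := gd_key f V1 hV1 ⟨y, hy1⟩
  have : Nonempty V1 := ⟨⟨y, hy1⟩⟩
  have hD : ∀ t : Γ(Y, V1), t ≠ 0 → topologicalKrullDim (Y.basicOpen t : Set Y) =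
      topologicalKrullDim (V0 : Set Y) := by
    intro t ht
    refine hd _ ?_ (Y.basicOpen_le t)
    have h2 : Y.basicOpen t ≠ ⊥ := by
      rwa [Ne, basicOpen_eq_bot_iff]
    exact Opens.ne_bot_iff_nonempty _ |>.mp h2
  have hc : IsCompact ((f ⁻¹ᵁ V1 : X.Opens) : Set X) := NoetherianSpace.isCompact _
  have hloc : ∀ x : (f ⁻¹ᵁ V1 : X.Opens), ∃ W : X.Opens, IsAffineOpen W ∧ x.1 ∈ W ∧
      W.1 ⊆ f ⁻¹ᵁ V1 := fun x => exists_isAffineOpen_mem_and_subset (U := f ⁻¹ᵁ V1) x.2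
  choose W hW hxW hWV using hloc
  obtain ⟨T, hT⟩ := hc.elim_finite_subcover (fun x => (W x : Set X)) (fun x => (W x).2)
    (fun x hx => Set.mem_iUnion.mpr ⟨⟨x, hx⟩, hxW ⟨x, hx⟩⟩)
  choose s hs0 hs using fun x => he (W x) (hW x) ⟨x.1, hxW x⟩ (hWV x)
  let S := ∏ x ∈ T, s x
  have hS0 : S ≠ 0 := Finset.prod_ne_zero_iff.mpr fun x _ => hs0 x
  have hupper : topologicalKrullDim ((f ⁻¹ᵁ Y.basicOpen S : X.Opens) : Set X) ≤
      topologicalKrullDim (V0 : Set Y) + (e : ℕ) := by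
    let O := f ⁻¹ᵁ Y.basicOpen S
    refine gd_dim_cover (X := (O : Set X)) (fun x : T => ⟨Subtype.val ⁻¹' (W x : Set X),
      (W x).2.preimage continuous_subtype_val⟩) ?_ _ ?_
    · rintro ⟨x, hx⟩
      have : x ∈ f ⁻¹ᵁ V1 := Y.basicOpen_le S hx
      obtain ⟨i, hi, hxi⟩ := Set.mem_iUnion₂.mp (hT this)
      exact ⟨⟨i, hi⟩, hxi⟩
    · rintro ⟨x, hx⟩
      rw [← hD S hS0, ← hs x S hS0 (Finset.dvd_prod_of_mem s hx)]
      let j : ((Subtype.val : ↥(O : Set X) → X) ⁻¹' (W x : Set X) : Set (O : Set X)) →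
        ((W x ⊓ O : X.Opens) : Set X) := fun z => ⟨z.1.1, z.2, z.1.2⟩
      have hj : Topology.IsInducing j := by
        have h1 : Topology.IsInducing ((Subtype.val : ↥(O : Set X) → X) ∘
            (Subtype.val : ↥((Subtype.val : ↥(O : Set X) → X) ⁻¹' (W x : Set X)) → ↥(O : Set X))) :=
          Topology.IsInducing.subtypeVal.comp (Topology.IsInducing.subtypeVal
            (t := (Subtype.val : ↥(O : Set X) → X) ⁻¹' (W x : Set X)))
        refine Topology.IsInducing.of_comp (g := Subtype.val) ?_ continuous_subtype_val h1
        exact Topology.IsInducing.subtypeVal.continuous_iff.mpr h1.continuous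
      exact hj.topologicalKrullDim_le
  refine ⟨Y.basicOpen S, Opens.ne_bot_iff_nonempty _ |>.mp (by rwa [Ne, basicOpen_eq_bot_iff]), ?_⟩
  intro U hU hUS
  apply le_antisymm
  · exact gd_dim_mono hUS
  · obtain ⟨x, hx⟩ := hU
    obtain ⟨U', hU', hxU', hU'U⟩ := exists_isAffineOpen_mem_and_subset (U := U) hx
    obtain ⟨s', hs'0, hs'⟩ := he U' hU' ⟨x, hxU'⟩
      (fun z hz => Y.basicOpen_le S (hUS (hU'U hz)))
    refine hupper.trans ?_
    rw [← hD s' hs'0, ← hs' s' hs'0 dvd_rfl]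
    exact gd_dim_mono (fun z hz => hU'U hz.1)

theorem gd_dim_preimage {X Y : Type*} [TopologicalSpace X] [TopologicalSpace Y] {i : X → Y}
    (hi : Topology.IsEmbedding i) (s : Set Y) (hs : s ⊆ Set.range i) :
    topologicalKrullDim (i ⁻¹' s) = topologicalKrullDim s := by
  refine IsHomeomorph.topologicalKrullDim_eq (s.restrictPreimage i) ?_
  rw [isHomeomorph_iff_isEmbedding_surjective]
  refine ⟨hi.restrictPreimage s, ?_⟩
  rintro ⟨y, hy⟩
  obtain ⟨x, rfl⟩ := hs hy
  exact ⟨⟨x, hy⟩, rfl⟩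

theorem gd_image {X Y : Scheme.{u}} (g : X ⟶ Y) [IsIntegral X] [QuasiCompact g]
    [IsNoetherian Y] : IsIntegral g.image ∧ IsNoetherian g.image := by
  constructor
  · refine ⟨⟨g.toImage (Classical.choice inferInstance)⟩, fun U hU => ?_⟩
    obtain ⟨x, hx⟩ := g.toImage.denseRange.exists_mem_open U.2 (Set.nonempty_coe_sort.mp hU)
    have : Nonempty (g.toImage ⁻¹ᵁ U) := ⟨⟨x, hx⟩⟩
    have hinj : Function.Injective (g.toImage.app U) :=
      TopCat.Presheaf.app_injective_of_stalkFunctor_map_injective (F := g.image.sheaf)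
        g.toImage.c U (fun x _ => g.stalkFunctor_toImage_injective x)
    exact hinj.isDomain (g.toImage.app U).hom
  · have := LocallyOfFiniteType.isLocallyNoetherian g.imageι
    have : CompactSpace g.image := g.imageι.isClosedEmbedding.compactSpace
    exact {}

theorem gd_red (X : Scheme.{u}) [IrreducibleSpace X] [IsNoetherian X] :
    ∃ (X' : Scheme.{u}) (i : X' ⟶ X), IsIntegral X' ∧ IsNoetherian X' ∧ IsClosedImmersion i ∧
      Function.Surjective i := by
  let g := X.fromSpecResidueField (genericPoint X)
  obtain ⟨h1, h2⟩ := gd_image g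
  refine ⟨g.image, g.imageι, h1, h2, inferInstance, ?_⟩
  rw [← Set.range_eq_univ, ← Set.univ_subset_iff, ← (genericPoint_spec X).def]
  refine closure_minimal ?_ g.imageι.isClosedEmbedding.isClosed_range
  rw [Set.singleton_subset_iff]
  have : genericPoint X ∈ Set.range g := by
    rw [Scheme.range_fromSpecResidueField]; rfl
  obtain ⟨x, hx⟩ := this
  refine ⟨g.toImage x, ?_⟩
  rw [← Scheme.Hom.comp_apply, Scheme.Hom.toImage_imageι, hx]

theorem gd_main {X Y : Scheme.{u}} [IrreducibleSpace X] [IsNoetherian X]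
    [IsNoetherian Y] (f : X ⟶ Y) [IsDominant f] [LocallyOfFiniteType f] :
    ∃ V : Y.Opens, (V : Set Y).Nonempty ∧ ∀ U : X.Opens, (U : Set X).Nonempty → U ≤ f ⁻¹ᵁ V →
      topologicalKrullDim (U : Set X) = topologicalKrullDim ((f ⁻¹ᵁ V : X.Opens) : Set X) := by
  obtain ⟨X', i, hX', hX'n, hi, his⟩ := gd_red X
  let g := i ≫ f
  have : QuasiCompact g := inferInstance
  have : LocallyOfFiniteType g := inferInstance
  obtain ⟨hY', hY'n⟩ := gd_image g
  let j := g.imageι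
  let h := g.toImage
  have hij : h ≫ j = i ≫ f := Scheme.Hom.toImage_imageι g
  have hhj : LocallyOfFiniteType (h ≫ j) := by rw [hij]; infer_instance
  have : LocallyOfFiniteType h := locallyOfFiniteType_of_comp h j
  have hjs : Function.Surjective j := by
    rw [← Set.range_eq_univ, ← Set.univ_subset_iff, ← f.denseRange.closure_range]
    refine closure_minimal ?_ g.imageι.isClosedEmbedding.isClosed_range
    rintro _ ⟨x, rfl⟩
    obtain ⟨x', rfl⟩ := his x
    refine ⟨h x', ?_⟩
    rw [← Scheme.Hom.comp_apply, ← Scheme.Hom.comp_apply, ← hij]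
  have hje : Topology.IsClosedEmbedding j := g.imageι.isClosedEmbedding
  have hie : Topology.IsEmbedding i := i.isClosedEmbedding.isEmbedding
  obtain ⟨V', hV'ne, hV'⟩ := gd_integral h
  obtain ⟨V, hV, hVV'⟩ := hje.isInducing.isOpen_iff.mp V'.2
  have hpre : h ⁻¹ᵁ V' = i ⁻¹ᵁ f ⁻¹ᵁ (⟨V, hV⟩ : Y.Opens) := by
    have : V' = j ⁻¹ᵁ (⟨V, hV⟩ : Y.Opens) := Opens.ext hVV'.symm
    rw [this, ← Scheme.Hom.comp_preimage, hij, Scheme.Hom.comp_preimage]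
  refine ⟨⟨V, hV⟩, ?_, ?_⟩
  · obtain ⟨y, hy⟩ := hV'ne
    refine ⟨j y, ?_⟩
    have : y ∈ j ⁻¹' V := by rw [hVV']; exact hy
    exact this
  · intro U hU hUV
    have h1 := hV' (i ⁻¹ᵁ U) (hU.preimage his) (by
      rw [hpre]; exact fun x hx => hUV hx)
    rw [hpre] at h1
    rw [← gd_dim_preimage hie (U : Set X) (by simp [his.range_eq]),
      ← gd_dim_preimage hie (f ⁻¹ᵁ (⟨V, hV⟩ : Y.Opens) : X.Opens) (by simp [his.range_eq])]
    exact h1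

end

/-- Lemma 3.2 of Hu–Yang. Let `X` and `Y` be irreducible excellent
Noetherian schemes and `f : X → Y` a dominant morphism of finite type. Then there
exists a nonempty Zariski open subscheme `V` of `Y` such that `X_V = X ×_Y V` is
generically dimensional. -/
theorem exists_nonempty_open_genericallyDimensional
    (X Y : Scheme.{u}) [IrreducibleSpace X] [IrreducibleSpace Y]
    [IsNoetherian X] [IsNoetherian Y] [IsExcellent X] [IsExcellent Y]
    (f : X ⟶ Y) [IsDominant f] [LocallyOfFiniteType f] [QuasiCompact f] :
    ∃ V : Y.Opens, (V : Set Y).Nonempty ∧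
      GenericallyDimensional (pullback f V.ι) := by
  obtain ⟨V, hV, hVU⟩ := gd_main f
  refine ⟨V, hV, fun U hU => ?_⟩
  let p := pullback.fst f V.ι
  have hp : Topology.IsEmbedding p := p.isOpenEmbedding.isEmbedding
  have hr : Set.range p = ((f ⁻¹ᵁ V : X.Opens) : Set X) := by
    rw [IsOpenImmersion.range_pullbackFst]; simp
  have h1 := hVU (p ''ᵁ U) (hU.image p) (by
    rintro _ ⟨x, -, rfl⟩
    have : p x ∈ Set.range p := ⟨x, rfl⟩
    rw [hr] at this
    exact this)
  have h2 := gd_dim_preimage hp (p '' (U : Set _)) (Set.image_subset_range _ _)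
  rw [Set.preimage_image_eq _ hp.injective] at h2
  have h3 := gd_dim_preimage hp (Set.range p) le_rfl
  rw [Set.preimage_range, hr] at h3
  have h4 := IsHomeomorph.topologicalKrullDim_eq _
    (Homeomorph.Set.univ (pullback f V.ι : Scheme.{u})).isHomeomorph
  rw [h2, ← h4, h3]
  exact h1
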